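/- In the presheaf category L = Set^{[R]} with Day convolution tensor, the presheaf [R] defined by [R](l) = {l} is the terminal object, and it is the initial algebra of the endofunctor X ↦ I ⊕ (R ⊗ X), where R is the indicator presheaf of singleton lists. -/

import Mathlib

/- Shared preamble: the presheaf category L = Set^{[R]} over the discrete
   monoidal category of lists of naturals under concatenation, with the Day
   convolution tensor, described concretely. -/

namespace LDay

/-- Objects of L = Set^{[R]}: families of sets indexed by lists of resource
    names (the base category is discrete, so no action on morphisms). -/
abbrev Obj : Type 1 := List ℕ → Type

/-- Morphisms of L. -/
abbrev Hom (A B : Obj) : Type := ∀ l, A l → B l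

def idH (A : Obj) : Hom A A := fun _ a => a

def comp {A B C : Obj} (f : Hom A B) (g : Hom B C) : Hom A C :=
  fun l a => g l (f l a)

/-- Day convolution tensor: (A ⊗ B)(l) = Σ_{l₁ ++ l₂ = l} A(l₁) × B(l₂). -/
structure DayT (A B : Obj) (l : List ℕ) : Type where
  l₁ : List ℕ
  l₂ : List ℕ
  eq : l₁ ++ l₂ = l
  a : A l₁
  b : B l₂

def Day (A B : Obj) : Obj := fun l => DayT A B l

def dayMap {A A' B B' : Obj} (f : Hom A A') (g : Hom B B') :
    Hom (Day A B) (Day A' B') :=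
  fun _ d => ⟨d.l₁, d.l₂, d.eq, f d.l₁ d.a, g d.l₂ d.b⟩

/-- The unit I: indicator of the empty list. -/
def Iobj : Obj := fun l => PLift (l = [])

/-- The terminal presheaf [R], [R](l) = {l}. -/
def Full : Obj := fun _ => PUnit

/-- The presheaf of resources: R(l) = {n} if l = [n], ∅ otherwise. -/
def Rp : Obj := fun l => { n : ℕ // l = [n] }

/-- Left internal hom: (A ⊸ B)(l₂) = ∀ l₁, A(l₁) → B(l₁ ++ l₂). -/
def lhom (A B : Obj) : Obj := fun l₂ => ∀ l₁, A l₁ → B (l₁ ++ l₂)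

/-- Right internal hom: (A ⊸_r B)(l₁) = ∀ l₂, A(l₂) → B(l₁ ++ l₂). -/
def rhom (A B : Obj) : Obj := fun l₁ => ∀ l₂, A l₂ → B (l₁ ++ l₂)

def lhomMap {A B B' : Obj} (g : Hom B B') : Hom (lhom A B) (lhom A B') :=
  fun _ k l₁ a => g _ (k l₁ a)

def rhomMap {A B B' : Obj} (g : Hom B B') : Hom (rhom A B) (rhom A B') :=
  fun _ k l₂ a => g _ (k l₂ a)

/-- Pointwise coproduct. -/
def sum' (A B : Obj) : Obj := fun l => A l ⊕ B l

def sumMap {A A' B B' : Obj} (f : Hom A A') (g : Hom B B') :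
    Hom (sum' A B) (sum' A' B') :=
  fun l s => Sum.map (f l) (g l) s

def inlH {A B : Obj} : Hom A (sum' A B) := fun _ a => Sum.inl a
def inrH {A B : Obj} : Hom B (sum' A B) := fun _ b => Sum.inr b

/-- Associator of the Day tensor. -/
def dayAssoc {A B C : Obj} : Hom (Day (Day A B) C) (Day A (Day B C)) :=
  fun _ d =>
    ⟨d.a.l₁, d.a.l₂ ++ d.l₂, by rw [← List.append_assoc, d.a.eq, d.eq],
      d.a.a, ⟨d.a.l₂, d.l₂, rfl, d.a.b, d.b⟩⟩

/-- Inverse associator of the Day tensor. -/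
def dayAssocInv {A B C : Obj} : Hom (Day A (Day B C)) (Day (Day A B) C) :=
  fun _ d =>
    ⟨d.l₁ ++ d.b.l₁, d.b.l₂, by rw [List.append_assoc, d.b.eq, d.eq],
      ⟨d.l₁, d.b.l₁, rfl, d.a, d.b.a⟩, d.b.b⟩

/-- Left unitor of the Day tensor. -/
def dayLUnit {B : Obj} : Hom (Day Iobj B) B := fun l d =>
  (show d.l₂ = l by have h := d.eq; rw [d.a.down] at h; simpa using h) ▸ d.b

/-- The allocation monad T A = [R] ⊸_r (A ⊗ [R]). -/
def Talloc (A : Obj) : Obj := rhom Full (Day A Full)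

def tallocMap {A B : Obj} (f : Hom A B) : Hom (Talloc A) (Talloc B) :=
  fun _ m l₂ u => dayMap f (idH Full) _ (m l₂ u)

/-- Unit of the allocation monad. -/
def tallocEta (A : Obj) : Hom A (Talloc A) :=
  fun l a l₂ _ => ⟨l, l₂, rfl, a, PUnit.unit⟩

/-- Multiplication of the allocation monad. -/
def tallocMu (A : Obj) : Hom (Talloc (Talloc A)) (Talloc A) :=
  fun _ m l₂ u =>
    let d := m l₂ u
    d.eq ▸ (d.a d.l₂ d.b)

end LDay

open LDay

/-- The endofunctor X ↦ I ⊕ (R ⊗ X). -/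
def listFunctor (X : Obj) : Obj := sum' Iobj (Day Rp X)

def listFunctorMap {X Y : Obj} (h : Hom X Y) :
    Hom (listFunctor X) (listFunctor Y) :=
  sumMap (idH Iobj) (dayMap (idH Rp) h)

/-!
Every list is either empty or of the form `n :: l = [n] ++ l`, in exactly one way. Hence
`I ⊕ (R ⊗ [R])` has exactly one element at every list, the unique map to `[R]` is an isomorphism,
and the algebra equation for a map `h : [R] → B` is precisely the recursion on lists
`h [] = β (inl _)`, `h (n :: l) = β (inr ([n], l, h l))`. Structural recursion solves it
(`listFold`), and induction on the list shows that the solution is unique.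
-/

/-- The mediating morphism from `[R]` to an algebra `(B, β)`, by structural recursion on the list
at which it is evaluated. -/
def listFold {B : Obj} (β : Hom (listFunctor B) B) : ∀ l, B l
  | [] => β [] (Sum.inl ⟨rfl⟩)
  | n :: l => β (n :: l) (Sum.inr ⟨[n], l, rfl, ⟨n, rfl⟩, listFold β l⟩)

/-- in L = Set^{[R]}, the presheaf [R] (with [R](l) = {l}) is
    the terminal object, and it is the initial algebra of the endofunctor
    X ↦ I ⊕ (R ⊗ X). -/
theorem full_terminal_and_initial_list_algebra :
    (∀ A : Obj, ∃ f : Hom A Full, ∀ g : Hom A Full, g = f) ∧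
    (∃ α : Hom (listFunctor Full) Full,
      ∀ (B : Obj) (β : Hom (listFunctor B) B),
        ∃! h : Hom Full B, comp α h = comp (listFunctorMap h) β) := by
  refine ⟨fun A => ⟨fun _ _ => PUnit.unit, fun g => rfl⟩, fun _ _ => PUnit.unit, fun B β =>
    ⟨fun l _ => listFold β l, ?_, ?_⟩⟩
  · funext l x
    rcases x with ⟨⟨rfl⟩⟩ | ⟨l₁, l₂, rfl, ⟨n, rfl⟩, u⟩
    · rfl
    · rfl
  · intro h hh
    funext l u
    induction l with
    | nil => exact congrFun (congrFun hh []) (Sum.inl ⟨rfl⟩)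
    | cons n l ih =>
      -- the algebra equation at the unique element of `(R ⊗ [R]) (n :: l)`
      have key : h (n :: l) u = β (n :: l) (Sum.inr ⟨[n], l, rfl, ⟨n, rfl⟩, h l u⟩) :=
        congrFun (congrFun hh (n :: l)) (Sum.inr ⟨[n], l, rfl, ⟨n, rfl⟩, u⟩)
      exact key.trans (congrArg
        (fun b => β (n :: l) (Sum.inr ⟨[n], l, rfl, ⟨n, rfl⟩, b⟩)) (ih u))
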